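/- Let N, L, M be natural numbers with 1 ≤ L ≤ N, and for each natural number j define prodset(j) ⊆ {0, …, N−1} as the image of {0, …, L−1} under the map r ↦ (j·L + r) mod N. For i < N let count(i) denote the number of indices j with 0 ≤ j < M such that i ∈ prodset(j). Then for all i, i' < N, |count(i) − count(i')| ≤ 1. -/

import Mathlib

/-!
The blocks `[j * L, j * L + L)` for `j < M` tile `[0, M * L)`, and since `L ≤ N` each block contains
at most one number congruent to `i` modulo `N`. So the number of `j < M` whose block meets the
residue class of `i` is the number of `t < M * L` with `t ≡ i [MOD N]`
(`card_blocks_eq_count`), and this is `M * L / N` or `M * L / N + 1` for every `i`.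
-/

/-- A window of `L ≤ N` consecutive integers contains each residue modulo `N` at most once. -/
lemma count_window (N L a i : ℕ) (hLN : L ≤ N) (hi : i < N) :
    Nat.count (fun r => a + r ≡ i [MOD N]) L =
      if i ∈ (Finset.range L).image (fun r => (a + r) % N) then 1 else 0 := by
  have hmod : ∀ r, a + r ≡ i [MOD N] ↔ (a + r) % N = i := fun r => by
    rw [Nat.ModEq, Nat.mod_eq_of_lt hi]
  rw [Nat.count_eq_card_filter_range]
  split_ifs with h
  · obtain ⟨r, hr, hri⟩ := Finset.mem_image.1 h
    refine Finset.card_eq_one.2 ⟨r, Finset.eq_singleton_iff_unique_mem.2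
      ⟨Finset.mem_filter.2 ⟨hr, (hmod r).2 hri⟩, fun s hs => ?_⟩⟩
    obtain ⟨hsL, hsi⟩ := Finset.mem_filter.1 hs
    have hsr : s ≡ r [MOD N] := Nat.ModEq.add_left_cancel' a (hsi.trans ((hmod r).2 hri).symm)
    rw [Finset.mem_range] at hr hsL
    exact hsr.eq_of_lt_of_lt (hsL.trans_le hLN) (hr.trans_le hLN)
  · refine Finset.card_eq_zero.2 (Finset.filter_eq_empty_iff.2 fun r hr hri => h ?_)
    exact Finset.mem_image.2 ⟨r, hr, (hmod r).1 hri⟩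

lemma card_blocks_eq_count (N L M i : ℕ) (hLN : L ≤ N) (hi : i < N) :
    ((Finset.range M).filter
      (fun j => i ∈ (Finset.range L).image (fun r => (j * L + r) % N))).card =
      Nat.count (· ≡ i [MOD N]) (M * L) := by
  induction M with
  | zero => simp
  | succ M ih =>
    rw [← Nat.count_eq_card_filter_range] at ih ⊢
    rw [Nat.count_succ, ih, Nat.succ_mul, Nat.count_add, count_window N L (M * L) i hLN hi]

/-- Load balancing: the numbers of consumers assigned to any two producers
differ by at most one. -/
theorem conset_card_balanced
    (N L M : ℕ) (hL : 1 ≤ L) (hLN : L ≤ N)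
    (count : ℕ → ℕ)
    (hcount : ∀ i, count i =
      ((Finset.range M).filter
        (fun j => i ∈ (Finset.range L).image (fun r => (j * L + r) % N))).card)
    (i i' : ℕ) (hi : i < N) (hi' : i' < N) :
    |(count i : ℤ) - (count i' : ℤ)| ≤ 1 := by
  have hN : 0 < N := hL.trans hLN
  rw [hcount, hcount, card_blocks_eq_count N L M i hLN hi, card_blocks_eq_count N L M i' hLN hi',
    Nat.count_modEq_card _ hN, Nat.count_modEq_card _ hN, abs_le]
  split_ifs <;> push_cast <;> constructor <;> linarith
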